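/- The map γ from symmetric 2-tensors of type (2,0)+(0,2) on ℝ^6 to 3-forms, defined by γ(h)_{ijk} = h_{ip}Ψ⁺_{pjk} + h_{jp}Ψ⁺_{pki} + h_{kp}Ψ⁺_{pij}, is injective, with left inverse h_{im} = (1/4) γ(h)_{ijk} Ψ⁺_{mjk}. -/

import Mathlib

open scoped BigOperators

/-- Antisymmetrized indicator of the ordered triple `(a,b,c)`: the components of the
basic 3-form `e_a ∧ e_b ∧ e_c`. -/
def tri (a b c i j k : Fin 6) : ℝ :=
  (if (i, j, k) = (a, b, c) then (1:ℝ) else 0) - (if (i, j, k) = (a, c, b) then 1 else 0)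
  + (if (i, j, k) = (b, c, a) then 1 else 0) - (if (i, j, k) = (b, a, c) then 1 else 0)
  + (if (i, j, k) = (c, a, b) then 1 else 0) - (if (i, j, k) = (c, b, a) then 1 else 0)

/-- Components of the fundamental 2-form `F = -e12 - e34 - e56` on ℝ⁶ (0-indexed). -/
def Fc : Fin 6 → Fin 6 → ℝ := fun i j =>
  !![0,-1,0,0,0,0; 1,0,0,0,0,0; 0,0,0,-1,0,0; 0,0,1,0,0,0; 0,0,0,0,0,-1; 0,0,0,0,1,0] i j

/-- Components of `Ψ⁺ = -e135 + e236 + e146 + e245` (0-indexed). -/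
def Psip (i j k : Fin 6) : ℝ :=
  -tri 0 2 4 i j k + tri 1 2 5 i j k + tri 0 3 5 i j k + tri 1 3 4 i j k

/-- Components of `Ψ⁻ = -e136 - e145 - e235 + e246` (0-indexed). -/
def Psim (i j k : Fin 6) : ℝ :=
  -tri 0 2 5 i j k - tri 0 3 4 i j k - tri 1 2 4 i j k + tri 1 3 5 i j k

/-- Components of the 4-form `Φ = (1/2) F ∧ F`:
`Φ_{jslm} = F_{js} F_{lm} + F_{sl} F_{jm} + F_{lj} F_{sm}`. -/
def Phi (i j k l : Fin 6) : ℝ := Fc i j * Fc k l + Fc j k * Fc i l + Fc k i * Fc j l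

/-- Kronecker delta on `Fin 6`. -/
def kron (i j : Fin 6) : ℝ := if i = j then 1 else 0

/-- The map `γ : S²₋ → Λ³₁₂`, `γ(h)_{ijk} = h_{ip}Ψ⁺_{pjk} + h_{jp}Ψ⁺_{pki} + h_{kp}Ψ⁺_{pij}`. -/
def gammaMap (h : Fin 6 → Fin 6 → ℝ) (i j k : Fin 6) : ℝ :=
  ∑ p : Fin 6, (h i p * Psip p j k + h j p * Psip p k i + h k p * Psip p i j)

/-- `h` is a symmetric 2-tensor of type (2,0)+(0,2): `h(X,Y) = h(Y,X)` and
`h(JX,JY) = -h(X,Y)`, where `J e_a = F_{ia} e_i`. -/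
def IsS2Minus (h : Fin 6 → Fin 6 → ℝ) : Prop :=
  (∀ a b, h a b = h b a) ∧
  (∀ a b, (∑ i : Fin 6, ∑ j : Fin 6, Fc i a * Fc j b * h i j) = - h a b)

/-!
Write `J` for the matrix of `F` and `dz₁, dz₂, dz₃` for the complex coordinate forms. Since
`Ψ⁺ = -Re (dz₁ ∧ dz₂ ∧ dz₃)`, the component `Ψ⁺_{ijk}` is minus the real part of a complex triple
product, and the Binet–Cauchy identity for the cross product on `ℂ³` becomes
`Ψ⁺_{kij} Ψ⁺_{klm} = δ_{il} δ_{jm} - F_{il} F_{jm} - δ_{im} δ_{jl} + F_{im} F_{jl}`.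
It follows that every bilinear form `h` satisfies
`γ(h)_{ijk} Ψ⁺_{mjk} = 2 (h + J h J + tr(h) 1 - tr(h J) J)_{im}`. If `h(JX, JY) = -h(X, Y)`, then
`J h J = h`, and both traces vanish because conjugating by the orthogonal matrix `J` preserves them
but changes the sign of `h`; what remains is `4 h_{im}`.
-/

open Matrix

theorem trace_mul_eq_zero_of_transpose_mul_mul_eq_neg {n R : Type*} [Fintype n] [DecidableEq n]
    [CommRing R] [IsAddTorsionFree R] {J h M : Matrix n n R} (hJ : J * Jᵀ = 1)
    (hh : Jᵀ * h * J = -h) (hM : Commute J M) : trace (h * M) = 0 := by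
  refine self_eq_neg.mp ?_
  calc trace (h * M) = trace (J * (Jᵀ * h * M)) := by
        rw [Matrix.mul_assoc, ← Matrix.mul_assoc J, hJ, Matrix.one_mul]
    _ = trace (Jᵀ * h * (M * J)) := by rw [trace_mul_comm, Matrix.mul_assoc]
    _ = trace (Jᵀ * h * J * M) := by rw [← hM.eq, Matrix.mul_assoc _ J]
    _ = -trace (h * M) := by rw [hh, Matrix.neg_mul, trace_neg]

theorem star_crossProduct {R : Type*} [CommRing R] [StarRing R] (u v : Fin 3 → R) :
    star (u ⨯₃ v) = star u ⨯₃ star v := by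
  ext c
  fin_cases c <;> simp [cross_apply, mul_comm]

/-- Row `i` holds the components `dz_c(e_i)`, `c = 1, 2, 3`, of the complex coordinate forms
`dz₁ = e1 + i e2`, `dz₂ = e3 + i e4`, `dz₃ = e5 + i e6`; in these terms `Ψ⁺` is a triple product
on `ℂ³`. -/
def dz (i : Fin 6) : Fin 3 → ℂ :=
  ![⟨kron i 0, kron i 1⟩, ⟨kron i 2, kron i 3⟩, ⟨kron i 4, kron i 5⟩]

theorem dz_dotProduct_star_dz (i j : Fin 6) : dz i ⬝ᵥ star (dz j) = ⟨kron i j, Fc i j⟩ := by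
  fin_cases i <;> fin_cases j <;>
    simp [dz, kron, Fc, dotProduct, Fin.sum_univ_three, Complex.ext_iff]

theorem sum_re_dz_dotProduct_mul_re_dz_dotProduct (u v : Fin 3 → ℂ) :
    ∑ k, (dz k ⬝ᵥ u).re * (dz k ⬝ᵥ v).re = (u ⬝ᵥ star v).re := by
  simp only [dotProduct, Fin.sum_univ_six, Fin.sum_univ_three, dz, cons_val, kron, Fin.reduceEq,
    zero_ne_one, one_ne_zero, ↓reduceIte, Complex.add_re, Complex.mul_re, Pi.star_apply,
    Complex.star_def, Complex.conj_re, Complex.conj_im]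
  ring

theorem tri_eq_det (a b c i j k : Fin 6) :
    tri a b c i j k =
      det !![kron i a, kron i b, kron i c; kron j a, kron j b, kron j c;
        kron k a, kron k b, kron k c] := by
  have hindicator (x y z : Fin 6) :
      (if (i, j, k) = (x, y, z) then (1 : ℝ) else 0) = kron i x * kron j y * kron k z := by
    simp only [kron, Prod.mk.injEq, ite_and, ite_mul, one_mul, zero_mul]
  simp only [tri, hindicator, det_fin_three, of_apply, cons_val]
  ring

theorem Psip_eq_neg_re_dz_dotProduct_crossProduct (i j k : Fin 6) :
    Psip i j k = -(dz i ⬝ᵥ dz j ⨯₃ dz k).re := by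
  simp only [Psip, tri_eq_det, det_fin_three, of_apply, dotProduct, Fin.sum_univ_three, dz,
    cross_apply, cons_val, Complex.add_re, Complex.sub_re, Complex.sub_im, Complex.mul_re,
    Complex.mul_im]
  ring

theorem Psip_rotate (i j k : Fin 6) : Psip i j k = Psip j k i := by
  simp only [Psip_eq_neg_re_dz_dotProduct_crossProduct, triple_product_permutation (dz i)]

theorem Psip_swap_right (i j k : Fin 6) : Psip i k j = -Psip i j k := by
  simp only [Psip_eq_neg_re_dz_dotProduct_crossProduct, ← cross_anticomm (dz j) (dz k),
    dotProduct_neg, Complex.neg_re]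

theorem sum_Psip_mul_Psip (i j l m : Fin 6) :
    ∑ k, Psip k i j * Psip k l m =
      kron i l * kron j m - Fc i l * Fc j m - (kron i m * kron j l - Fc i m * Fc j l) := by
  calc ∑ k, Psip k i j * Psip k l m
      = ∑ k, (dz k ⬝ᵥ dz i ⨯₃ dz j).re * (dz k ⬝ᵥ dz l ⨯₃ dz m).re := by
        simp only [Psip_eq_neg_re_dz_dotProduct_crossProduct, neg_mul_neg]
    _ = (dz i ⨯₃ dz j ⬝ᵥ star (dz l) ⨯₃ star (dz m)).re := by
        rw [sum_re_dz_dotProduct_mul_re_dz_dotProduct, star_crossProduct]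
    _ = _ := by
        simp only [cross_dot_cross, dz_dotProduct_star_dz, Complex.sub_re, Complex.mul_re]

theorem Fc_mul_transpose_Fc : of Fc * (of Fc)ᵀ = 1 := by
  ext i j
  fin_cases i <;> fin_cases j <;> simp [Fc, mul_apply, Fin.sum_univ_six]

theorem transpose_Fc : (of Fc)ᵀ = -of Fc := by
  ext i j
  fin_cases i <;> fin_cases j <;> simp [Fc]

theorem Fc_mul_Fc : of Fc * of Fc = -1 := by
  rw [← neg_eq_iff_eq_neg, ← Matrix.mul_neg, ← transpose_Fc, Fc_mul_transpose_Fc]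

theorem sum_sum_Psip_mul_Psip (p m : Fin 6) :
    ∑ j, ∑ k, Psip p j k * Psip m j k = 4 * kron p m := by
  have hdiag (j : Fin 6) : Fc j j = 0 := by fin_cases j <;> simp [Fc]
  have hsq : ∑ j, Fc p j * Fc j m = -kron p m := by
    simpa [mul_apply, one_apply, kron] using congr_fun₂ Fc_mul_Fc p m
  have hone : ∑ j, kron p j * kron j m = kron p m := by simp [kron]
  have htrace : ∑ j, kron p m * kron j j = 6 * kron p m := by simp [kron]
  simp only [← Psip_rotate _ p, ← Psip_rotate _ m, sum_Psip_mul_Psip, hdiag, mul_zero, sub_zero,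
    Finset.sum_sub_distrib, hsq, hone, htrace]
  ring

/-- Bilinear forms of type `(2,0)+(0,2)`, not necessarily symmetric: `h(JX, JY) = -h(X, Y)`,
written with `of Fc` as the matrix of `J`. The symmetric ones form `S²₋`. -/
def IsJAntiInvariant (h : Fin 6 → Fin 6 → ℝ) : Prop :=
  (of Fc)ᵀ * of h * of Fc = -of h

theorem IsS2Minus.isJAntiInvariant {h : Fin 6 → Fin 6 → ℝ} (hh : IsS2Minus h) :
    IsJAntiInvariant h := by
  ext a b
  rw [neg_apply, of_apply, ← hh.2 a b]
  simp only [mul_apply, Finset.sum_mul, transpose_apply, of_apply]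
  rw [Finset.sum_comm]
  exact Finset.sum_congr rfl fun i _ ↦ Finset.sum_congr rfl fun j _ ↦ by ring

theorem sum_mul_Psip_mul_Psip (h : Fin 6 → Fin 6 → ℝ) (i m : Fin 6) :
    ∑ j, ∑ k, ∑ p, h j p * Psip p k i * Psip m j k =
      trace (of h) * kron i m - trace (of h * of Fc) * Fc i m - h i m
        + (of Fc * of h * of Fc) i m := by
  calc ∑ j, ∑ k, ∑ p, h j p * Psip p k i * Psip m j k
      = ∑ j, ∑ p, h j p * ∑ k, Psip k i p * Psip k m j := by
        simp only [Psip_rotate _ _ i, ← Psip_rotate _ m, Finset.mul_sum, mul_assoc]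
        exact Finset.sum_congr rfl fun j _ ↦ Finset.sum_comm
    _ = (∑ j, ∑ p, h j p * kron p j) * kron i m - (∑ j, ∑ p, h j p * Fc p j) * Fc i m
          - ∑ j, ∑ p, h j p * (kron i j * kron p m) + ∑ j, ∑ p, Fc i j * h j p * Fc p m := by
        simp only [sum_Psip_mul_Psip, Finset.sum_mul, ← Finset.sum_add_distrib,
          ← Finset.sum_sub_distrib]
        exact Finset.sum_congr rfl fun j _ ↦ Finset.sum_congr rfl fun p _ ↦ by ring
    _ = _ := by
        congr 1
        · simp [kron, trace, mul_apply]
        · simp only [mul_apply, Finset.sum_mul, of_apply]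
          exact Finset.sum_comm

theorem sum_gammaMap_mul_Psip (h : Fin 6 → Fin 6 → ℝ) (i m : Fin 6) :
    ∑ j, ∑ k, gammaMap h i j k * Psip m j k =
      2 * (h i m + (of Fc * of h * of Fc) i m
        + trace (of h) * kron i m - trace (of h * of Fc) * Fc i m) := by
  have hfirst : ∑ j, ∑ k, ∑ p, h i p * Psip p j k * Psip m j k = 4 * h i m := by
    calc ∑ j, ∑ k, ∑ p, h i p * Psip p j k * Psip m j k
        = ∑ p, h i p * ∑ j, ∑ k, Psip p j k * Psip m j k := by
          simp only [Finset.mul_sum, mul_assoc]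
          exact Finset.sum_comm_cycle
      _ = 4 * h i m := by simp [sum_sum_Psip_mul_Psip, kron, mul_comm]
  have hthird : ∑ j, ∑ k, ∑ p, h k p * Psip p i j * Psip m j k =
      ∑ j, ∑ k, ∑ p, h j p * Psip p k i * Psip m j k := by
    rw [Finset.sum_comm]
    refine Finset.sum_congr rfl fun j _ ↦ Finset.sum_congr rfl fun k _ ↦
      Finset.sum_congr rfl fun p _ ↦ ?_
    rw [Psip_swap_right p k i, Psip_swap_right m j k]
    ring
  calc ∑ j, ∑ k, gammaMap h i j k * Psip m j k
      = ∑ j, ∑ k, ∑ p, h i p * Psip p j k * Psip m j k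
        + ∑ j, ∑ k, ∑ p, h j p * Psip p k i * Psip m j k
        + ∑ j, ∑ k, ∑ p, h k p * Psip p i j * Psip m j k := by
        simp only [gammaMap, Finset.sum_mul, add_mul, Finset.sum_add_distrib]
    _ = _ := by
        rw [hthird, hfirst, sum_mul_Psip_mul_Psip]
        ring

theorem IsJAntiInvariant.eq_sum_gammaMap_mul_Psip {h : Fin 6 → Fin 6 → ℝ}
    (hh : IsJAntiInvariant h) (i m : Fin 6) :
    h i m = (1 / 4) * ∑ j, ∑ k, gammaMap h i j k * Psip m j k := by
  have htrace : trace (of h) = 0 := by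
    simpa using trace_mul_eq_zero_of_transpose_mul_mul_eq_neg Fc_mul_transpose_Fc hh (.one_right _)
  have htraceF : trace (of h * of Fc) = 0 :=
    trace_mul_eq_zero_of_transpose_mul_mul_eq_neg Fc_mul_transpose_Fc hh (.refl _)
  have hconj : of Fc * of h * of Fc = of h := by
    rwa [IsJAntiInvariant, transpose_Fc, Matrix.neg_mul, Matrix.neg_mul, neg_inj] at hh
  rw [sum_gammaMap_mul_Psip, htrace, htraceF, hconj, of_apply]
  ring

theorem gammaMap_left_inverse_and_injective_general :
    (∀ h : Fin 6 → Fin 6 → ℝ, IsJAntiInvariant h →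
      ∀ i m : Fin 6, h i m = (1 / 4) * ∑ j, ∑ k, gammaMap h i j k * Psip m j k) ∧
    (∀ h₁ h₂ : Fin 6 → Fin 6 → ℝ, IsJAntiInvariant h₁ → IsJAntiInvariant h₂ →
      (∀ i j k, gammaMap h₁ i j k = gammaMap h₂ i j k) → h₁ = h₂) := by
  refine ⟨fun h hh ↦ hh.eq_sum_gammaMap_mul_Psip, fun h₁ h₂ hh₁ hh₂ hγ ↦ ?_⟩
  ext i m
  rw [hh₁.eq_sum_gammaMap_mul_Psip, hh₂.eq_sum_gammaMap_mul_Psip]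
  simp only [hγ]

/-- on `S²₋` the map `γ` has the left inverse
`h_{im} = (1/4) γ(h)_{ijk} Ψ⁺_{mjk}`; in particular it is injective. -/
theorem gammaMap_left_inverse_and_injective :
    (∀ h : Fin 6 → Fin 6 → ℝ, IsS2Minus h →
      ∀ i m : Fin 6, h i m = (1/4) * ∑ j : Fin 6, ∑ k : Fin 6, gammaMap h i j k * Psip m j k) ∧
    (∀ h₁ h₂ : Fin 6 → Fin 6 → ℝ, IsS2Minus h₁ → IsS2Minus h₂ →
      (∀ i j k, gammaMap h₁ i j k = gammaMap h₂ i j k) → h₁ = h₂) :=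
  ⟨fun h hh ↦ gammaMap_left_inverse_and_injective_general.1 h hh.isJAntiInvariant,
    fun h₁ h₂ hh₁ hh₂ ↦ gammaMap_left_inverse_and_injective_general.2 h₁ h₂
      hh₁.isJAntiInvariant hh₂.isJAntiInvariant⟩
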